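/- arXiv:1610.01850 — 3 statements merged into one kernel-verified Lean document; each statement's English description precedes it below -/
import Mathlib

section
/- Let Y_n ⊂ ℝ² be a Π_n-poised set, k ∈ Π of exact degree 1 with zero set K = V(k) satisfying Y_n ∩ K = ∅, and let T ⊂ K be a set of n + 2 distinct points, Y_{n+1} = Y_n ∪ T. Then the polynomials h_t := ℓ_{t,Y_{n+1}} ∈ Π_{n+1} ∩ I(Y_n), t ∈ T, are ℝ[k]-independent — that is, whenever Σ_{t∈T} c_t(k) h_t = 0 for univariate real polynomials c_t, then c_t = 0 for every t ∈ T — and they form an H-basis of the ideal I(Y_n). -/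
open MvPolynomial

noncomputable section

abbrev Pt : Type := Fin 2 → ℝ
abbrev BPoly : Type := MvPolynomial (Fin 2) ℝ

/-- `Π_n`: the space of bivariate polynomials of total degree at most `n`. -/
def PiLE (n : ℕ) : Submodule ℝ BPoly := MvPolynomial.restrictTotalDegree (Fin 2) ℝ n

/-- The vanishing ideal `I(Y)` of a set `Y ⊆ ℝ²`. -/
def vIdeal (Y : Set Pt) : Ideal BPoly where
  carrier := {p | ∀ y ∈ Y, eval y p = 0}
  add_mem' := by
    intro a b ha hb y hy
    simp [map_add, ha y hy, hb y hy]
  zero_mem' := by intro y hy; simp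
  smul_mem' := by
    intro c a ha y hy
    simp [smul_eq_mul, ha y hy]

/-- `I(Y)` as an `ℝ`-subspace of `Π`. -/
def vSub (Y : Set Pt) : Submodule ℝ BPoly := (vIdeal Y).restrictScalars ℝ

/-- `Y` is `Π_n`-poised: every interpolation problem on `Y` has a unique solution in `Π_n`. -/
def Poised (n : ℕ) (Y : Finset Pt) : Prop :=
  ∀ f : Pt → ℝ, ∃! p : BPoly, p ∈ PiLE n ∧ ∀ y ∈ Y, eval y p = f y

/-- `Y` is `Π_n`-independent: every interpolation problem on `Y` has a solution in `Π_n`. -/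
def PIndep (n : ℕ) (Y : Finset Pt) : Prop :=
  ∀ f : Pt → ℝ, ∃ p ∈ PiLE n, ∀ y ∈ Y, eval y p = f y

/-- `ℓ y` is the fundamental (Lagrange) polynomial of `y ∈ Y` in `Π_n`. -/
def IsFundamental (n : ℕ) (Y : Finset Pt) (ℓ : Pt → BPoly) : Prop :=
  ∀ y ∈ Y, ℓ y ∈ PiLE n ∧ ∀ y' ∈ Y, eval y' (ℓ y) = if y' = y then 1 else 0

/-- A finite family is an H-basis of the ideal `I`. -/
def IsHBasisFam {ι : Type} [Fintype ι] (I : Ideal BPoly) (h : ι → BPoly) : Prop :=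
  (∀ i, h i ∈ I) ∧ ∀ f ∈ I, ∃ g : ι → BPoly,
    (∀ i, (g i).totalDegree ≤ f.totalDegree - (h i).totalDegree) ∧ f = ∑ i, g i * h i

/-- A finite set is an H-basis of the ideal `I`. -/
def IsHBasisSet (I : Ideal BPoly) (H : Finset BPoly) : Prop :=
  (∀ p ∈ H, p ∈ I) ∧ ∀ f ∈ I, ∃ g : BPoly → BPoly,
    (∀ p ∈ H, (g p).totalDegree ≤ f.totalDegree - p.totalDegree) ∧ f = ∑ p ∈ H, g p * p

/-- `M` is a linear syzygy matrix for the family `h`. -/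
def IsLinSyz (n : ℕ) (h : Fin (n + 2) → BPoly)
    (M : Matrix (Fin (n + 1)) (Fin (n + 2)) BPoly) : Prop :=
  (∀ i j, M i j ∈ PiLE 1) ∧ ∀ i, ∑ j, M i j * h j = 0

/-- The rank of a polynomial matrix over the field of rational functions. -/
def ratRank {a b : ℕ} (M : Matrix (Fin a) (Fin b) BPoly) : ℕ :=
  (M.map (algebraMap BPoly (FractionRing BPoly))).rank


/-- A polynomial of total degree one in explicit form. -/
lemma linear_form (k : BPoly) (hk : k.totalDegree = 1) :
    ∃ a b c : ℝ, k = C a * X 0 + C b * X 1 + C c ∧ a ^ 2 + b ^ 2 ≠ 0 := by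
  have hform : k = C (coeff (Finsupp.single 0 1) k) * X 0 + C (coeff (Finsupp.single 1 1) k) * X 1
      + C (coeff 0 k) := by
    ext m
    by_cases hm : 1 < ∑ i ∈ m.support, m i
    · have h0 : m ≠ 0 := by rintro rfl; simp at hm
      have h1 : m ≠ Finsupp.single 0 1 := by
        rintro rfl
        rw [← Finsupp.degree_apply, Finsupp.degree_single] at hm; omega
      have h2 : m ≠ Finsupp.single 1 1 := by
        rintro rfl
        rw [← Finsupp.degree_apply, Finsupp.degree_single] at hm; omega
      rw [coeff_eq_zero_of_totalDegree_lt (by omega)]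
      simp [coeff_C, coeff_X, h0.symm, h1.symm, h2.symm]
    · have hs : m 0 + m 1 ≤ 1 := by
        have : ∑ i ∈ m.support, m i = m 0 + m 1 := by
          rw [← Finsupp.degree_apply, Finsupp.degree_eq_sum, Fin.sum_univ_two]
        omega
      have hcases : m = 0 ∨ m = Finsupp.single 0 1 ∨ m = Finsupp.single 1 1 := by
        have : (m 0 = 0 ∧ m 1 = 0) ∨ (m 0 = 1 ∧ m 1 = 0) ∨ (m 0 = 0 ∧ m 1 = 1) := by omega
        rcases this with h | h | h
        · left; ext i; fin_cases i <;> simp [h]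
        · right; left; ext i; fin_cases i <;> simp [h]
        · right; right; ext i; fin_cases i <;> simp [h]
      rcases hcases with rfl | rfl | rfl
      · simp [coeff_X]
      · simp [coeff_X, coeff_C, Finsupp.single_left_inj]
        intro h
        have := DFunLike.congr_fun h 0
        simp at this
      · simp [coeff_X, coeff_C, Finsupp.single_left_inj]
        intro h
        have := DFunLike.congr_fun h 1
        simp at this
  refine ⟨_, _, _, hform, ?_⟩
  intro h
  have ha : coeff (Finsupp.single 0 1) k = 0 := by nlinarith [sq_nonneg (coeff (Finsupp.single 0 1) k), sq_nonneg (coeff (Finsupp.single 1 1) k)]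
  have hb : coeff (Finsupp.single 1 1) k = 0 := by nlinarith [sq_nonneg (coeff (Finsupp.single 0 1) k), sq_nonneg (coeff (Finsupp.single 1 1) k)]
  rw [ha, hb] at hform
  rw [hform] at hk
  simp at hk

/-- Restriction to the line `k = 0` together with a coordinate `l` on it. -/
lemma line_data (k : BPoly) (hk : k.totalDegree = 1) :
    ∃ (φ : BPoly →ₐ[ℝ] Polynomial ℝ) (l : BPoly), l.totalDegree ≤ 1 ∧
      (∀ p, (φ p).natDegree ≤ p.totalDegree) ∧ φ l = Polynomial.X ∧
      (∀ p, ∃ q, p = Polynomial.aeval l (φ p) + k * q) := by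
  obtain ⟨a, b, c, rfl, hD⟩ := linear_form k hk
  set D := a ^ 2 + b ^ 2 with hDdef
  let w : Fin 2 → Polynomial ℝ :=
    ![Polynomial.C (-b) * Polynomial.X + Polynomial.C (-(c * a) / D),
      Polynomial.C a * Polynomial.X + Polynomial.C (-(c * b) / D)]
  let l : BPoly := C (-b / D) * X 0 + C (a / D) * X 1
  have hc1 : C (σ := Fin 2) (1 : ℝ) = 1 := C_1
  refine ⟨aeval w, l, ?_, ?_, ?_, ?_⟩
  · refine (totalDegree_add _ _).trans (max_le ?_ ?_) <;>
    · refine (totalDegree_mul _ _).trans ?_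
      simp
  · intro p
    have := MvPolynomial.aeval_natDegree_le p le_rfl w (n := 1) (by
      intro i
      fin_cases i
      · exact Polynomial.natDegree_linear_le
      · exact Polynomial.natDegree_linear_le)
    simpa using this
  · simp only [l, w, map_add, map_mul, aeval_X, algHom_C, Matrix.cons_val_zero, Matrix.cons_val_one]
    change Polynomial.C _ * _ + Polynomial.C _ * _ = _
    have e1 : (-b / D) * (-b) + (a / D) * a = 1 := by field_simp; rw [hDdef]; ring
    have e2 : (-b / D) * (-(c * a) / D) + (a / D) * (-(c * b) / D) = 0 := by field_simp; ring
    have e1' := congrArg (Polynomial.C (R := ℝ)) e1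
    have e2' := congrArg (Polynomial.C (R := ℝ)) e2
    rw [Polynomial.C_add, Polynomial.C_mul, Polynomial.C_mul, Polynomial.C_1] at e1'
    rw [Polynomial.C_add, Polynomial.C_mul, Polynomial.C_mul, Polynomial.C_0] at e2'
    linear_combination Polynomial.X * e1' + e2'
  · intro p
    set k : BPoly := C a * X 0 + C b * X 1 + C c with hkdef
    let π := Ideal.Quotient.mkₐ ℝ (Ideal.span {k})
    have hmain : π = π.comp ((Polynomial.aeval l).comp (aeval w)) := by
      apply MvPolynomial.algHom_ext
      intro i
      simp only [AlgHom.comp_apply, aeval_X]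
      rw [← sub_eq_zero, ← map_sub]
      apply Ideal.Quotient.eq_zero_iff_mem.mpr
      rw [Ideal.mem_span_singleton]
      fin_cases i
      · refine ⟨C (a / D), ?_⟩
        simp only [w, l, hkdef, Fin.zero_eta, Matrix.cons_val_zero, map_add, map_mul, Polynomial.aeval_X, Polynomial.aeval_C, algebraMap_eq]
        have e1 : 1 - b * b / D = a * a / D := by field_simp; rw [hDdef]; ring
        have e1' := congrArg (C (σ := Fin 2)) e1
        have e2 := congrArg (C (σ := Fin 2)) (show -b * (a / D) = - (b * (a/D)) by ring)
        have e3 := congrArg (C (σ := Fin 2)) (show -(c * a) / D = - (c * (a/D)) by ring)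
        have e4 := congrArg (C (σ := Fin 2)) (show b * b / D = - b * (-b/D) by ring)
        have e5 := congrArg (C (σ := Fin 2)) (show a * a / D = a * (a/D) by ring)
        simp only [C_sub, C_1] at e1'
        rw [e4, e5] at e1'
        simp only [C_mul, C_neg] at e1' e2 e3 ⊢
        linear_combination (X 0) * e1' - e3
      · refine ⟨C (b / D), ?_⟩
        simp only [w, l, hkdef, Fin.mk_one, Matrix.cons_val_one, Matrix.cons_val_zero, map_add, map_mul, Polynomial.aeval_X, Polynomial.aeval_C, algebraMap_eq]
        have e1 : 1 - a * a / D = b * b / D := by field_simp; rw [hDdef]; ring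
        have e1' := congrArg (C (σ := Fin 2)) e1
        have e2 := congrArg (C (σ := Fin 2)) (show a * (-b / D) = - (a * (b/D)) by ring)
        have e3 := congrArg (C (σ := Fin 2)) (show -(c * b) / D = - (c * (b/D)) by ring)
        have e4 := congrArg (C (σ := Fin 2)) (show a * a / D = a * (a/D) by ring)
        have e5 := congrArg (C (σ := Fin 2)) (show b * b / D = b * (b/D) by ring)
        simp only [C_sub, C_1] at e1'
        rw [e4, e5] at e1'
        simp only [C_mul, C_neg] at e1' e2 e3 ⊢
        linear_combination (X 1) * e1' - e3 - (X 0) * e2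
    have h := DFunLike.congr_fun hmain p
    simp only [AlgHom.comp_apply] at h
    rw [← sub_eq_zero, ← map_sub] at h
    have h' := Ideal.Quotient.eq_zero_iff_mem.mp h
    rw [Ideal.mem_span_singleton] at h'
    obtain ⟨q, hq⟩ := h'
    exact ⟨q, by rw [← hq]; ring⟩

lemma totalDegree_aeval_le (l : BPoly) (hl : l.totalDegree ≤ 1) (u : Polynomial ℝ) :
    (Polynomial.aeval l u).totalDegree ≤ u.natDegree := by
  rw [Polynomial.aeval_eq_sum_range]
  apply totalDegree_finsetSum_le
  intro i hi
  refine (totalDegree_smul_le _ _).trans ((totalDegree_pow _ _).trans ?_)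
  have : i ≤ u.natDegree := by simpa [Nat.lt_succ_iff] using hi
  nlinarith

lemma eval_aeval (l : BPoly) (u : Polynomial ℝ) (t : Pt) :
    eval t (Polynomial.aeval l u) = u.eval (eval t l) := by
  have : (aeval t : BPoly →ₐ[ℝ] ℝ) (Polynomial.aeval l u) = Polynomial.aeval (aeval t l) u :=
    (Polynomial.aeval_algHom_apply _ _ _).symm
  simpa [MvPolynomial.coe_aeval_eq_eval, Polynomial.coe_aeval_eq_eval] using this

lemma quot_degree (k q : BPoly) (hk : k.totalDegree = 1) (m : ℕ)
    (h : (k * q).totalDegree ≤ m + 1) : q.totalDegree ≤ m := by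
  by_cases hq : q = 0
  · simp [hq]
  · have hk0 : k ≠ 0 := by rintro rfl; simp at hk
    rw [totalDegree_mul_of_isDomain hk0 hq] at h
    omega

/-- Bounded-degree representation with a univariate Lagrange basis. -/
lemma univ_rep {ι : Type} [Fintype ι] [DecidableEq ι] (n : ℕ) (hcard : Fintype.card ι = n + 2)
    (z : ι → ℝ) (hz : Function.Injective z) (lam : ι → Polynomial ℝ)
    (hdeg : ∀ i, (lam i).natDegree ≤ n + 1)
    (hev : ∀ i j, (lam i).eval (z j) = if j = i then 1 else 0) (d : ℕ) :
    ∀ u : Polynomial ℝ, u.natDegree ≤ n + 1 + d →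
      ∃ a : ι → Polynomial ℝ, (∀ i, (a i).natDegree ≤ d) ∧ u = ∑ i, a i * lam i := by
  have base : ∀ u : Polynomial ℝ, u.natDegree ≤ n + 1 →
      ∃ a : ι → Polynomial ℝ, (∀ i, (a i).natDegree ≤ 0) ∧ u = ∑ i, a i * lam i := by
    intro u hu
    refine ⟨fun i => Polynomial.C (u.eval (z i)), fun i => by simp, ?_⟩
    rw [← sub_eq_zero]
    apply Polynomial.eq_zero_of_natDegree_lt_card_of_eval_eq_zero _ hz
    · intro j
      simp [Polynomial.eval_finsetSum, hev]
    · rw [hcard]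
      refine Nat.lt_succ_of_le ((Polynomial.natDegree_sub_le _ _).trans (max_le hu ?_))
      apply Polynomial.natDegree_sum_le_of_forall_le
      intro i _
      exact (Polynomial.natDegree_C_mul_le _ _).trans (hdeg i)
  induction d with
  | zero => exact base
  | succ d ih =>
    intro u hu
    obtain ⟨a, ha, hau⟩ := ih u.divX (by
      rw [Polynomial.natDegree_divX_eq_natDegree_tsub_one]; omega)
    obtain ⟨b, hb, hbu⟩ := base (Polynomial.C (u.coeff 0)) (by simp)
    refine ⟨fun i => Polynomial.X * a i + b i, ?_, ?_⟩
    · intro i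
      refine (Polynomial.natDegree_add_le _ _).trans (max_le ?_ ((hb i).trans (by omega)))
      refine Polynomial.natDegree_mul_le.trans ?_
      have := ha i
      rw [Polynomial.natDegree_X]; omega
    · conv_lhs => rw [← Polynomial.X_mul_divX_add u, hau, hbu]
      simp [add_mul, Finset.sum_add_distrib, Finset.mul_sum, mul_assoc]

/-- In the Berzolari–Radon construction, the polynomials
`h_t := ℓ_{t,Y_{n+1}}`, `t ∈ T`, lie in `Π_{n+1} ∩ I(Y_n)`, are
`ℝ[k]`-independent, and form an H-basis of the ideal `I(Y_n)`. -/
theorem stmt12 (n : ℕ) (Y T : Finset Pt) (k : BPoly) (hk : k.totalDegree = 1)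
    (hY : Poised n Y)
    (hYK : ∀ y ∈ Y, eval y k ≠ 0)
    (hT : ∀ t ∈ T, eval t k = 0)
    (hTcard : T.card = n + 2)
    (L : Pt → BPoly)
    (hL : IsFundamental (n + 1) (Y ∪ T) L) :
    (∀ t ∈ T, L t ∈ PiLE (n + 1) ⊓ vSub (Y : Set Pt)) ∧
    (∀ c : {x // x ∈ T} → Polynomial ℝ,
      (∑ t : {x // x ∈ T}, Polynomial.aeval k (c t) * L (t : Pt)) = 0 →
        ∀ t : {x // x ∈ T}, c t = 0) ∧
    IsHBasisFam (vIdeal (Y : Set Pt)) (fun t : {x // x ∈ T} => L (t : Pt)) := by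
  classical
  obtain ⟨φ, l, hl, hφd, hφl, hdec⟩ := line_data k hk
  have hk0 : k ≠ 0 := by rintro rfl; simp at hk
  have hmem : ∀ (m : ℕ) (p : BPoly), p ∈ PiLE m ↔ p.totalDegree ≤ m := fun m p =>
    MvPolynomial.mem_restrictTotalDegree _ _ _
  have hdisj : ∀ y ∈ Y, ∀ t ∈ T, y ≠ t := by
    rintro y hy t ht rfl
    exact hYK y hy (hT y ht)
  have hLd : ∀ t ∈ T, (L t).totalDegree ≤ n + 1 := fun t ht =>
    (hmem _ _).1 (hL t (Finset.mem_union_right _ ht)).1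
  have hLY : ∀ t ∈ T, ∀ y ∈ Y, eval y (L t) = 0 := fun t ht y hy => by
    rw [(hL t (Finset.mem_union_right _ ht)).2 y (Finset.mem_union_left _ hy),
      if_neg (hdisj y hy t ht)]
  have hLT : ∀ t ∈ T, ∀ s ∈ T, eval s (L t) = if s = t then 1 else 0 := fun t ht s hs =>
    (hL t (Finset.mem_union_right _ ht)).2 s (Finset.mem_union_right _ hs)
  -- polynomials of degree at most n vanishing on Y are zero
  have hzero : ∀ p : BPoly, p.totalDegree ≤ n → (∀ y ∈ Y, eval y p = 0) → p = 0 := by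
    intro p hp hpy
    obtain ⟨r, _, hr⟩ := hY (fun _ => 0)
    rw [hr p ⟨(hmem _ _).2 hp, hpy⟩, hr 0 ⟨Submodule.zero_mem _, by simp⟩]
  have hLdeg : ∀ t ∈ T, (L t).totalDegree = n + 1 := by
    intro t ht
    by_contra hne
    have h0 := hzero (L t) (by have := hLd t ht; omega) (hLY t ht)
    have h1 := hLT t ht t ht
    simp [h0] at h1
  -- evaluation on the line
  have hφev : ∀ p : BPoly, ∀ t ∈ T, (φ p).eval (eval t l) = eval t p := by
    intro p t ht
    obtain ⟨q, hq⟩ := hdec p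
    conv_rhs => rw [hq]
    rw [map_add, map_mul, eval_aeval, hT t ht, zero_mul, add_zero]
  have hinj : Function.Injective (fun t : {x // x ∈ T} => eval (t : Pt) l) := by
    rintro ⟨s, hs⟩ ⟨t, ht⟩ hst
    simp only at hst
    apply Subtype.ext
    funext i
    have h1 := hφev (X i) s hs
    have h2 := hφev (X i) t ht
    rw [eval_X] at h1 h2
    change s i = t i
    rw [← h1, ← h2, hst]
  have hφaev : ∀ u : Polynomial ℝ, φ (Polynomial.aeval l u) = u := by
    intro u
    rw [← Polynomial.aeval_algHom_apply, hφl, Polynomial.aeval_X_left_apply]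
  have hcard : Fintype.card {x // x ∈ T} = n + 2 := by rw [Fintype.card_coe, hTcard]
  have hrep := univ_rep n hcard _ hinj (fun t => φ (L (t : Pt)))
    (fun t => (hφd _).trans (hLd t t.2))
    (fun i j => by
      rw [hφev _ _ j.2, hLT i i.2 j j.2]
      exact if_congr Subtype.ext_iff.symm rfl rfl)
  have hbasis : ∀ d : ℕ, ∀ f : BPoly, (∀ y ∈ Y, eval y f = 0) → f.totalDegree ≤ n + d →
      ∃ g : {x // x ∈ T} → BPoly, (∀ i, (g i).totalDegree ≤ d - 1) ∧
        f = ∑ i, g i * L (i : Pt) := by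
    intro d
    induction d with
    | zero =>
      intro f hf hd
      exact ⟨fun _ => 0, by simp, by simp [hzero f hd hf]⟩
    | succ d ih =>
      intro f hf hd
      obtain ⟨a, had, ha⟩ := hrep d (φ f) ((hφd f).trans (by omega))
      obtain ⟨q, hq⟩ := hdec (f - ∑ i, Polynomial.aeval l (a i) * L (i : Pt))
      have hφ0 : φ (f - ∑ i, Polynomial.aeval l (a i) * L (i : Pt)) = 0 := by
        simp only [map_sub, map_sum, map_mul, hφaev]
        rw [← ha, sub_self]
      rw [hφ0, map_zero, zero_add] at hq
      have had' : ∀ i, (Polynomial.aeval l (a i)).totalDegree ≤ d := fun i =>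
        (totalDegree_aeval_le l hl _).trans (had i)
      have hqd : q.totalDegree ≤ n + d := by
        apply quot_degree k q hk
        rw [← hq]
        refine (totalDegree_sub _ _).trans (max_le (by omega) ?_)
        apply totalDegree_finsetSum_le
        intro i _
        refine (totalDegree_mul _ _).trans ?_
        have := had' i
        have := hLd i i.2
        omega
      have hqY : ∀ y ∈ Y, eval y q = 0 := by
        intro y hy
        have h := congrArg (eval y) hq
        have hs : ∑ x : {x // x ∈ T}, eval y (Polynomial.aeval l (a x)) * eval y (L (x : Pt)) = 0 :=
          Finset.sum_eq_zero fun i _ => by rw [hLY i i.2 y hy, mul_zero]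
        simp only [map_sub, map_sum, map_mul, hf y hy, hs, sub_self] at h
        exact (mul_eq_zero.mp h.symm).resolve_left (hYK y hy)
      obtain ⟨g, hg, hgq⟩ := ih q hqY hqd
      rcases Nat.eq_zero_or_pos d with hd0 | hdpos
      · have hq0 : q = 0 := hzero q (by omega) hqY
        refine ⟨fun i => Polynomial.aeval l (a i), fun i => (had' i).trans (by omega), ?_⟩
        rw [hq0, mul_zero] at hq
        exact sub_eq_zero.mp hq
      · refine ⟨fun i => Polynomial.aeval l (a i) + k * g i, fun i => ?_, ?_⟩
        · refine (totalDegree_add _ _).trans (max_le ((had' i).trans (by omega)) ?_)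
          refine (totalDegree_mul _ _).trans ?_
          have := hg i
          omega
        · rw [sub_eq_iff_eq_add, hgq] at hq
          rw [hq]
          simp only [add_mul, Finset.sum_add_distrib, Finset.mul_sum, mul_assoc]
          rw [add_comm]
  refine ⟨?_, ?_, ?_⟩
  · intro t ht
    exact ⟨(hmem _ _).2 (hLd t ht), fun y hy => hLY t ht y hy⟩
  · have hind : ∀ (j : ℕ) (c : {x // x ∈ T} → Polynomial ℝ),
        (∑ t : {x // x ∈ T}, Polynomial.aeval k (c t) * L (t : Pt)) = 0 →
          ∀ t, (c t).coeff j = 0 := by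
      intro j
      have h0 : ∀ c : {x // x ∈ T} → Polynomial ℝ,
          (∑ t : {x // x ∈ T}, Polynomial.aeval k (c t) * L (t : Pt)) = 0 →
          ∀ t, (c t).coeff 0 = 0 := by
        intro c hc s
        have h := congrArg (eval (s : Pt)) hc
        rw [map_sum, map_zero, Finset.sum_eq_single s] at h
        · rw [map_mul, hLT s s.2 s s.2, if_pos rfl, mul_one, eval_aeval, hT s s.2] at h
          rwa [Polynomial.coeff_zero_eq_eval_zero]
        · intro t _ hts
          rw [map_mul, hLT t t.2 s s.2, if_neg (fun h => hts (Subtype.ext h.symm)), mul_zero]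
        · simp
      induction j with
      | zero => exact h0
      | succ j ih =>
        intro c hc t
        rw [← Polynomial.coeff_divX]
        apply ih (fun t => (c t).divX)
        have hX : ∀ t, c t = Polynomial.X * (c t).divX := by
          intro t
          conv_lhs => rw [← Polynomial.X_mul_divX_add (c t), h0 c hc t]
          simp
        have : k * (∑ t : {x // x ∈ T}, Polynomial.aeval k ((c t).divX) * L (t : Pt)) = 0 := by
          rw [← hc, Finset.mul_sum]
          refine Finset.sum_congr rfl fun t _ => ?_
          conv_rhs => rw [hX t]
          rw [map_mul, Polynomial.aeval_X, mul_assoc]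
        exact (mul_eq_zero.mp this).resolve_left hk0
    intro c hc t
    ext j
    exact (hind j c hc t).trans (Polynomial.coeff_zero j).symm
  · refine ⟨fun t y hy => hLY t t.2 y hy, ?_⟩
    intro f hf
    obtain ⟨g, hg, hfg⟩ := hbasis (f.totalDegree - n) f (fun y hy => hf y hy) (by omega)
    refine ⟨g, fun i => (hg i).trans ?_, hfg⟩
    rw [hLdeg i i.2]
    omega
end
end

section
/- Let Y_n ⊂ ℝ² be a Π_n-poised set. Then for every H-basis (h_0, …, h_{n+1}) of I(Y_n) consisting of n + 2 elements there exists a linear syzygy matrix Σ(x) ∈ Π_1^{(n+1)×(n+2)} of rank n + 1, and any such syzygy matrix determines the H-basis up to a nonzero constant factor: there exists w ≠ 0 such that h_j(x) = (−1)^j · w · det Σ_j(x) for j = 0, …, n+1, where Σ_j(x) is the (n+1)×(n+1) submatrix obtained from Σ(x) by removing the column of index j. -/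
open MvPolynomial

noncomputable section

/-- exponent of the monomial `x^(n+1-k) y^k`. -/
def expo (n : ℕ) (k : Fin (n + 2)) : Fin 2 →₀ ℕ :=
  Finsupp.single 0 (n + 1 - (k : ℕ)) + Finsupp.single 1 (k : ℕ)

lemma expo_zero (n : ℕ) (k : Fin (n + 2)) : expo n k 0 = n + 1 - (k : ℕ) := by
  simp [expo]

lemma expo_one (n : ℕ) (k : Fin (n + 2)) : expo n k 1 = (k : ℕ) := by
  simp [expo]

lemma expo_inj (n : ℕ) (k l : Fin (n + 2)) : expo n k = expo n l ↔ k = l := by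
  constructor
  · intro h
    have := congrArg (fun s => s 1) h
    simp only [expo_one] at this
    exact Fin.ext this
  · rintro rfl; rfl

lemma mem_PiLE {n : ℕ} {p : BPoly} : p ∈ PiLE n ↔ p.totalDegree ≤ n := by
  simp [PiLE, mem_restrictTotalDegree]

lemma deg_eq (s : Fin 2 →₀ ℕ) : s.degree = s 0 + s 1 := by
  simp [Finsupp.degree_eq_sum]

lemma poised_zero {n : ℕ} {Y : Finset Pt} (hY : Poised n Y) {p : BPoly}
    (hp : p ∈ vIdeal (Y : Set Pt)) (hd : p.totalDegree ≤ n) : p = 0 := by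
  obtain ⟨q, hq, hu⟩ := hY (fun _ => 0)
  rw [hu p ⟨mem_PiLE.2 hd, fun y hy => hp y hy⟩, hu 0 ⟨Submodule.zero_mem _, by simp⟩]

/-- reduced polynomials -/
lemma exists_f {n : ℕ} {Y : Finset Pt} (hY : Poised n Y) :
    ∃ q : Fin (n + 2) → BPoly, (∀ k, (q k).totalDegree ≤ n) ∧
      ∀ k, monomial (expo n k) (1 : ℝ) - q k ∈ vIdeal (Y : Set Pt) := by
  choose q hq _ using fun k : Fin (n + 2) => hY (fun y => eval y (monomial (expo n k) (1 : ℝ)))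
  refine ⟨q, fun k => mem_PiLE.1 (hq k).1, fun k y hy => ?_⟩
  rw [map_sub, (hq k).2 y hy, sub_self]

lemma coeff_q {n : ℕ} {q : BPoly} (hq : q.totalDegree ≤ n) (s : Fin 2 →₀ ℕ)
    (hs : n < s 0 + s 1) : coeff s q = 0 := by
  apply coeff_eq_zero_of_totalDegree_lt
  have := deg_eq s
  rw [Finsupp.degree_apply] at this
  omega

lemma coeff_f {n : ℕ} {q : Fin (n + 2) → BPoly} (hq : ∀ k, (q k).totalDegree ≤ n)
    (k l : Fin (n + 2)) :
    coeff (expo n l) (monomial (expo n k) (1 : ℝ) - q k) = if k = l then 1 else 0 := by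
  have : coeff (expo n l) (q k) = 0 := by
    apply coeff_q (hq k)
    rw [expo_zero, expo_one]; omega
  rw [coeff_sub, this, coeff_monomial, sub_zero]
  simp only [expo_inj]

lemma hb_expand {n : ℕ} {Y : Finset Pt} (hY : Poised n Y) {q : Fin (n + 2) → BPoly}
    (hq : ∀ k, (q k).totalDegree ≤ n)
    (hqI : ∀ k, monomial (expo n k) (1 : ℝ) - q k ∈ vIdeal (Y : Set Pt))
    {p : BPoly} (hp : p ∈ vIdeal (Y : Set Pt)) (hd : p.totalDegree ≤ n + 1) :
    p = ∑ k, C (coeff (expo n k) p) * (monomial (expo n k) (1 : ℝ) - q k) := by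
  rw [← sub_eq_zero]
  apply poised_zero hY
  · exact Ideal.sub_mem _ hp (Ideal.sum_mem _ fun k _ => Ideal.mul_mem_left _ _ (hqI k))
  · rw [totalDegree, Finset.sup_le_iff]
    intro s hs
    rw [mem_support_iff] at hs
    by_contra hc
    apply hs
    have hc' : n < s 0 + s 1 := by
      rw [← deg_eq, Finsupp.degree_apply]
      exact not_le.1 hc
    rw [coeff_sub, coeff_sum]
    by_cases hs1 : s 0 + s 1 = n + 1
    · obtain ⟨l, rfl⟩ : ∃ l, s = expo n l := by
        refine ⟨⟨s 1, by omega⟩, ?_⟩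
        ext i
        fin_cases i
        · simp only [Fin.zero_eta, expo_zero]; omega
        · simp only [Fin.mk_one, expo_one]
      simp only [coeff_C_mul, coeff_f hq]
      simp
    · rw [coeff_q hd s (by omega), Finset.sum_eq_zero, sub_zero]
      intro k _
      rw [coeff_C_mul, coeff_sub, coeff_q (hq k) s (by omega), coeff_monomial, if_neg, sub_zero,
        mul_zero]
      rintro rfl
      rw [expo_zero, expo_one] at hs1
      omega

lemma h_deg {n : ℕ} {Y : Finset Pt} (hY : Poised n Y) {p : BPoly}
    (hp : p ∈ vIdeal (Y : Set Pt)) (h0 : p ≠ 0) : n + 1 ≤ p.totalDegree := by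
  by_contra hc
  exact h0 (poised_zero hY hp (by omega))

lemma const_expand {n : ℕ} {Y : Finset Pt} (hY : Poised n Y) {h : Fin (n + 2) → BPoly}
    (hHB : IsHBasisFam (vIdeal (Y : Set Pt)) h)
    {p : BPoly} (hp : p ∈ vIdeal (Y : Set Pt)) (hd : p.totalDegree ≤ n + 1) :
    ∃ a : Fin (n + 2) → ℝ, p = ∑ j, C (a j) * h j := by
  obtain ⟨g, hg, hs⟩ := hHB.2 p hp
  refine ⟨fun j => coeff 0 (g j), hs.trans (Finset.sum_congr rfl fun j _ => ?_)⟩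
  by_cases h0 : h j = 0
  · simp [h0]
  · have h1 := h_deg hY (hHB.1 j) h0
    have h2 := hg j
    rw [← totalDegree_eq_zero_iff_eq_C.1 (by omega : (g j).totalDegree = 0)]

lemma common_unit {n : ℕ} {Y : Finset Pt} {h : Fin (n + 2) → BPoly}
    (hHB : IsHBasisFam (vIdeal (Y : Set Pt)) h) {b : BPoly} (hb : ∀ j, b ∣ h j) :
    IsUnit b := by
  have hI : ∀ p ∈ vIdeal (Y : Set Pt), b ∣ p := by
    intro p hp
    obtain ⟨g, _, hs⟩ := hHB.2 p hp
    rw [hs]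
    exact Finset.dvd_sum fun j _ => (hb j).mul_left _
  have key : ∀ i j : Fin 2, i ≠ j → b.degreeOf j = 0 := by
    intro i j hij
    have hm : (∏ y ∈ Y, (X i - C (y i)) : BPoly) ∈ vIdeal (Y : Set Pt) := by
      intro y hy
      rw [map_prod]
      exact Finset.prod_eq_zero (Finset.mem_coe.1 hy) (by simp)
    have hne : (∏ y ∈ Y, (X i - C (y i)) : BPoly) ≠ 0 := by
      rw [Finset.prod_ne_zero_iff]
      intro y _ h0
      have := congrArg (coeff (Finsupp.single i 1)) h0
      simp [coeff_C, Finsupp.single_eq_zero, eq_comm] at this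
    have hdeg : (∏ y ∈ Y, (X i - C (y i)) : BPoly).degreeOf j = 0 := by
      have := degreeOf_prod_le j Y (fun y : Pt => (X i - C (y i) : BPoly))
      refine Nat.le_zero.1 (this.trans (le_of_eq (Finset.sum_eq_zero fun y _ => ?_)))
      apply Nat.le_zero.1
      refine (degreeOf_sub_le _ _ _).trans ?_
      simp [degreeOf_X, hij.symm]
    obtain ⟨c, hc⟩ := hI _ hm
    rw [hc] at hne hdeg
    rw [degreeOf_mul_eq (left_ne_zero_of_mul hne) (right_ne_zero_of_mul hne)] at hdeg
    omega
  have hb0 : b ≠ 0 := by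
    rintro rfl
    have hm : (∏ y ∈ Y, (X 0 - C (y 0)) : BPoly) ∈ vIdeal (Y : Set Pt) := by
      intro y hy
      rw [map_prod]
      exact Finset.prod_eq_zero (Finset.mem_coe.1 hy) (by simp)
    have := zero_dvd_iff.1 (hI _ hm)
    rw [Finset.prod_eq_zero_iff] at this
    obtain ⟨y, _, h0⟩ := this
    have := congrArg (coeff (Finsupp.single 0 1)) h0
    simp [coeff_C, Finsupp.single_eq_zero, eq_comm] at this
  have hd : b.totalDegree = 0 := by
    rw [totalDegree_eq_zero_iff]
    intro m hm i
    have h1 : b.degreeOf i = 0 := by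
      fin_cases i
      · exact key 1 0 (by decide)
      · exact key 0 1 (by decide)
    have := monomial_le_degreeOf i hm
    omega
  rw [totalDegree_eq_zero_iff_eq_C] at hd
  rw [hd] at hb0 ⊢
  refine IsUnit.map C (isUnit_iff_ne_zero.2 ?_)
  rintro h0
  rw [h0, map_zero] at hb0
  exact hb0 rfl

lemma det_deg {n : ℕ} (N : Matrix (Fin n) (Fin n) BPoly)
    (hN : ∀ i j, (N i j).totalDegree ≤ 1) : N.det.totalDegree ≤ n := by
  rw [Matrix.det_apply]
  refine totalDegree_finsetSum_le fun σ _ => ?_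
  refine (totalDegree_smul_le _ _).trans ?_
  refine (totalDegree_finsetProd _ _).trans ?_
  refine (Finset.sum_le_sum fun i _ => hN _ _).trans ?_
  simp

lemma det_syz {R : Type*} [CommRing R] {n : ℕ} (M : Matrix (Fin (n + 1)) (Fin (n + 2)) R)
    (i : Fin (n + 1)) :
    ∑ j : Fin (n + 2), M i j * ((-1) ^ (j : ℕ) * (M.submatrix id j.succAbove).det) = 0 := by
  let N : Matrix (Fin (n + 2)) (Fin (n + 2)) R := Matrix.of (Fin.cons (α := fun _ => Fin (n + 2) → R) (M i) M)
  have e0 : N 0 = M i := rfl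
  have e1 : ∀ a : Fin (n + 1), N a.succ = M a := fun _ => rfl
  have h1 : N.det = 0 := by
    apply Matrix.det_zero_of_row_eq (i := 0) (j := i.succ) (Fin.succ_ne_zero i).symm
    rw [e0, e1]
  rw [Matrix.det_succ_row_zero] at h1
  rw [← h1]
  refine Finset.sum_congr rfl fun j _ => ?_
  have : N.submatrix Fin.succ j.succAbove = M.submatrix id j.succAbove := by
    ext a b; rw [Matrix.submatrix_apply, e1]; rfl
  rw [this, e0]; ring

lemma ker_one {K : Type*} [Field K] {n : ℕ} (M : Matrix (Fin (n + 1)) (Fin (n + 2)) K)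
    (hM : M.rank = n + 1) (v : Fin (n + 2) → K) (hv0 : v ≠ 0) (hv : M.mulVec v = 0)
    (u : Fin (n + 2) → K) (hu : M.mulVec u = 0) : ∃ c : K, c • v = u := by
  have h1 := LinearMap.finrank_range_add_finrank_ker M.mulVecLin
  have h2 : Module.finrank K (LinearMap.ker M.mulVecLin) = 1 := by
    have : Module.finrank K (LinearMap.range M.mulVecLin) = n + 1 := hM
    simp at h1
    omega
  obtain ⟨c, hc⟩ := (finrank_eq_one_iff_of_nonzero'
    (⟨v, by simpa using hv⟩ : LinearMap.ker M.mulVecLin) (by simpa using hv0)).1 h2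
    ⟨u, by simpa using hu⟩
  exact ⟨c, congrArg Subtype.val hc⟩

lemma deg_f {n : ℕ} {q : Fin (n + 2) → BPoly} (hq : ∀ k, (q k).totalDegree ≤ n)
    (k : Fin (n + 2)) : (monomial (expo n k) (1 : ℝ) - q k).totalDegree ≤ n + 1 := by
  refine (totalDegree_sub _ _).trans (max_le ?_ ((hq k).trans (Nat.le_succ n)))
  rw [totalDegree_monomial _ one_ne_zero]
  have := deg_eq (expo n k)
  rw [Finsupp.degree_apply, expo_zero, expo_one] at this
  change ((expo n k).sum fun _ e => e) = _ at this
  rw [this]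
  omega

lemma exists_AB {n : ℕ} {Y : Finset Pt} (hY : Poised n Y) {h : Fin (n + 2) → BPoly}
    (hHB : IsHBasisFam (vIdeal (Y : Set Pt)) h) {q : Fin (n + 2) → BPoly}
    (hq : ∀ k, (q k).totalDegree ≤ n)
    (hqI : ∀ k, monomial (expo n k) (1 : ℝ) - q k ∈ vIdeal (Y : Set Pt)) :
    ∃ A : Matrix (Fin (n + 2)) (Fin (n + 2)) ℝ,
      (∀ k, monomial (expo n k) (1 : ℝ) - q k = ∑ j, C (A k j) * h j) ∧
      A * Matrix.of (fun j l => coeff (expo n l) (h j)) = 1 := by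
  choose A hA using fun k => const_expand hY hHB (hqI k) (deg_f hq k)
  refine ⟨Matrix.of A, hA, ?_⟩
  ext k l
  rw [Matrix.mul_apply, Matrix.one_apply, ← coeff_f hq k l, hA k, coeff_sum]
  simp [coeff_C_mul]

lemma h_ne {n : ℕ} {Y : Finset Pt} (hY : Poised n Y) {h : Fin (n + 2) → BPoly}
    (hHB : IsHBasisFam (vIdeal (Y : Set Pt)) h) (j : Fin (n + 2)) : h j ≠ 0 := by
  obtain ⟨q, hq, hqI⟩ := exists_f hY
  obtain ⟨A, hA, hAB⟩ := exists_AB hY hHB hq hqI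
  rw [mul_eq_one_comm] at hAB
  intro h0
  have := congrFun (congrFun hAB j) j
  simp [Matrix.mul_apply, h0] at this

lemma exists_syz {n : ℕ} {Y : Finset Pt} (hY : Poised n Y) {h : Fin (n + 2) → BPoly}
    (hHB : IsHBasisFam (vIdeal (Y : Set Pt)) h) :
    ∃ M : Matrix (Fin (n + 1)) (Fin (n + 2)) BPoly,
        IsLinSyz n h M ∧ ratRank M = n + 1 := by
  obtain ⟨q, hq, hqI⟩ := exists_f hY
  obtain ⟨A, hA, hAB⟩ := exists_AB hY hHB hq hqI
  set f : Fin (n + 2) → BPoly := fun k => monomial (expo n k) (1 : ℝ) - q k with hf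
  have hr : ∀ k : Fin (n + 1), X 1 * f k.castSucc - X 0 * f k.succ
      = X 0 * q k.succ - X 1 * q k.castSucc := by
    intro k
    have : X 1 * monomial (expo n k.castSucc) (1 : ℝ) = X 0 * monomial (expo n k.succ) 1 := by
      simp only [X, monomial_mul, mul_one]
      have e : (Finsupp.single 1 1 : Fin 2 →₀ ℕ) + expo n k.castSucc
          = Finsupp.single 0 1 + expo n k.succ := by
        ext i
        fin_cases i
        · simp [expo_zero]; omega
        · simp [expo_one]; omega
      rw [e]
    simp only [hf, mul_sub, this]
    ring
  have hrd : ∀ k : Fin (n + 1), (X 1 * f k.castSucc - X 0 * f k.succ).totalDegree ≤ n + 1 := by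
    intro k
    rw [hr]
    refine (totalDegree_sub _ _).trans (max_le ?_ ?_)
    · refine (totalDegree_mul _ _).trans ?_
      have := hq k.succ
      rw [totalDegree_X]; omega
    · refine (totalDegree_mul _ _).trans ?_
      have := hq k.castSucc
      rw [totalDegree_X]; omega
  have hrI : ∀ k : Fin (n + 1), X 1 * f k.castSucc - X 0 * f k.succ ∈ vIdeal (Y : Set Pt) :=
    fun k => Ideal.sub_mem _ (Ideal.mul_mem_left _ _ (hqI _)) (Ideal.mul_mem_left _ _ (hqI _))
  have hrE := fun k => hb_expand hY hq hqI (hrI k) (hrd k)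
  let c : Fin (n + 1) → Fin (n + 2) → ℝ :=
    fun k j => coeff (expo n j) (X 1 * f k.castSucc - X 0 * f k.succ)
  let S : Matrix (Fin (n + 1)) (Fin (n + 2)) BPoly := Matrix.of fun k j =>
    (if j = k.castSucc then X 1 else 0) - (if j = k.succ then X 0 else 0) - C (c k j)
  have hSd : ∀ k j, (S k j) ∈ PiLE 1 := by
    intro k j
    refine Submodule.sub_mem _ (Submodule.sub_mem _ ?_ ?_) ?_
    · split_ifs
      · exact mem_PiLE.2 (totalDegree_X _).le
      · exact Submodule.zero_mem _
    · split_ifs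
      · exact mem_PiLE.2 (totalDegree_X _).le
      · exact Submodule.zero_mem _
    · exact mem_PiLE.2 (by simp)
  have hSf : ∀ k, ∑ j, S k j * f j = 0 := by
    intro k
    have h1 := hrE k
    simp only [S, Matrix.of_apply, sub_mul, Finset.sum_sub_distrib, ite_mul, zero_mul,
      Finset.sum_ite_eq', Finset.mem_univ, if_true]
    rw [sub_eq_zero]
    exact h1
  let A' : Matrix (Fin (n + 2)) (Fin (n + 2)) BPoly := A.map C
  let B' : Matrix (Fin (n + 2)) (Fin (n + 2)) BPoly :=
    (Matrix.of (fun j l => coeff (expo n l) (h j))).map C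
  have hAB' : A' * B' = 1 := by
    have := congrArg (RingHom.mapMatrix (C : ℝ →+* BPoly)) hAB
    rw [map_mul, map_one] at this
    exact this
  refine ⟨S * A', ⟨?_, ?_⟩, ?_⟩
  · intro i j
    rw [Matrix.mul_apply]
    refine Submodule.sum_mem _ fun l _ => ?_
    rw [mul_comm]
    change C (A l j) * S i l ∈ _
    rw [C_mul']
    exact Submodule.smul_mem _ _ (hSd i l)
  · intro i
    rw [← hSf i]
    have hA' : f = A'.mulVec h := by
      ext1 k
      exact hA k
    change (S * A').mulVec h i = S.mulVec f i
    rw [hA', Matrix.mulVec_mulVec]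
  · unfold ratRank
    set K := FractionRing BPoly
    set φ := algebraMap BPoly K
    refine le_antisymm ?_ ?_
    · simpa using Matrix.rank_le_card_height ((S * A').map φ)
    have hS : (S * A').map φ * B'.map φ = S.map φ := by
      rw [← Matrix.map_mul, Matrix.mul_assoc, hAB', Matrix.mul_one]
    refine le_trans ?_ (Matrix.rank_mul_le_left _ (B'.map φ))
    rw [hS]
    refine le_trans ?_ (Matrix.rank_submatrix_le (S.map φ) id Fin.castSucc)
    rw [Matrix.rank_of_isUnit]
    · simp
    rw [Matrix.isUnit_iff_isUnit_det, isUnit_iff_ne_zero]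
    have e : (S.map φ).submatrix id Fin.castSucc = φ.mapMatrix (S.submatrix id Fin.castSucc) := rfl
    rw [e, ← RingHom.map_det]
    intro h0
    have h1 : (S.submatrix id Fin.castSucc).det = 0 := IsFractionRing.injective BPoly K
      (h0.trans (map_zero _).symm)
    let ψ : BPoly →+* Polynomial ℝ := eval₂Hom Polynomial.C ![0, Polynomial.X]
    have h2 := congrArg ψ h1
    rw [RingHom.map_det, map_zero] at h2
    have h3 : ψ.mapMatrix (S.submatrix id Fin.castSucc)
        = (Matrix.of fun k j : Fin (n + 1) => c k j.castSucc).charmatrix := by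
      ext1 k j
      simp only [RingHom.mapMatrix_apply, Matrix.map_apply, Matrix.submatrix_apply, id, S,
        Matrix.of_apply, map_sub, Matrix.charmatrix_apply, ψ, Matrix.diagonal_apply]
      simp only [apply_ite (eval₂Hom Polynomial.C ![0, Polynomial.X])]
      simp [eq_comm]
    rw [h3] at h2
    exact (Matrix.charpoly_monic _).ne_zero h2

lemma unique_syz {n : ℕ} {Y : Finset Pt} (hY : Poised n Y) {h : Fin (n + 2) → BPoly}
    (hHB : IsHBasisFam (vIdeal (Y : Set Pt)) h)
    (M : Matrix (Fin (n + 1)) (Fin (n + 2)) BPoly)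
    (hM : IsLinSyz n h M) (hR : ratRank M = n + 1) :
    ∃ w : ℝ, w ≠ 0 ∧ ∀ j : Fin (n + 2),
          h j = (-1) ^ (j : ℕ) * C w * (M.submatrix id j.succAbove).det := by
  unfold ratRank at hR
  set K := FractionRing BPoly
  set φ := algebraMap BPoly K with hφ
  have hinj : Function.Injective φ := IsFractionRing.injective BPoly K
  have hne := h_ne hY hHB
  let d : Fin (n + 2) → BPoly := fun j => (-1) ^ (j : ℕ) * (M.submatrix id j.succAbove).det
  have hd : ∀ i, ∑ j, M i j * d j = 0 := det_syz M
  have lift : ∀ u : Fin (n + 2) → BPoly, (∀ i, ∑ j, M i j * u j = 0) →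
      (M.map φ).mulVec (fun j => φ (u j)) = 0 := by
    intro u hu
    ext1 i
    have := congrArg φ (hu i)
    simpa [Matrix.mulVec, dotProduct, map_sum] using this
  have hv0 : (fun j => φ (h j)) ≠ 0 := by
    intro h0
    exact hne 0 (hinj ((congrFun h0 0).trans (map_zero _).symm))
  have ker := ker_one (M.map φ) hR _ hv0 (lift h hM.2)
  -- the first minor does not vanish
  have hd0 : (M.submatrix id (Fin.succAbove 0)).det ≠ 0 := by
    intro h0
    have h1 : ((M.map φ).submatrix id (Fin.succAbove 0)).det = 0 := by
      have e : (M.map φ).submatrix id (Fin.succAbove 0)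
        = φ.mapMatrix (M.submatrix id (Fin.succAbove 0)) := rfl
      rw [e, ← RingHom.map_det, h0, map_zero]
    obtain ⟨v, hv, hv'⟩ := Matrix.exists_mulVec_eq_zero_iff.2 h1
    obtain ⟨c, hc⟩ := ker (Fin.cons 0 v) (by
      ext1 i
      have := congrFun hv' i
      simpa [Matrix.mulVec, dotProduct, Fin.sum_univ_succ] using this)
    have hc0 : c = 0 := by
      have := congrFun hc 0
      simp only [Pi.smul_apply, Fin.cons_zero, smul_eq_mul, mul_eq_zero] at this
      rcases this with h | h
      · exact h
      · exact absurd (hinj (h.trans (map_zero _).symm)) (hne 0)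
    apply hv
    ext1 i
    have := congrFun hc i.succ
    simpa [hc0] using this.symm
  obtain ⟨c, hc⟩ := ker _ (lift d hd)
  obtain ⟨a, b, hab, hfrac⟩ := IsFractionRing.exists_reduced_fraction (A := BPoly) (K := K) c
  have hmul : ∀ j, a * h j = b * d j := by
    intro j
    apply hinj
    have h1 := congrFun hc j
    simp only [Pi.smul_apply, smul_eq_mul] at h1
    have h2 : c * φ b = φ a := by
      rw [← hfrac]; exact IsLocalization.mk'_spec K a b
    rw [map_mul, map_mul, ← h1, ← h2]
    ring
  have hbu : IsUnit (b : BPoly) := common_unit hHB fun j =>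
    hab.symm.dvd_of_dvd_mul_left (Dvd.intro _ (hmul j).symm)
  obtain ⟨b', hb'⟩ := hbu.exists_left_inv
  have hg : ∀ j, d j = (b' * a) * h j := by
    intro j
    rw [mul_assoc, hmul, ← mul_assoc, hb', one_mul]
  have hdd : (d 0).totalDegree ≤ n + 1 := by
    have := det_deg (M.submatrix id (Fin.succAbove 0)) fun i j => mem_PiLE.1 (hM.1 _ _)
    simpa [d] using this
  have hd0' : d 0 ≠ 0 := by simpa [d] using hd0
  have hg0 : b' * a ≠ 0 := by
    intro h0
    exact hd0' (by rw [hg, h0, zero_mul])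
  have hgd : (b' * a).totalDegree = 0 := by
    have h1 := h_deg hY (hHB.1 0) (hne 0)
    rw [hg, totalDegree_mul_of_isDomain hg0 (hne 0)] at hdd
    omega
  rw [totalDegree_eq_zero_iff_eq_C] at hgd
  set t := coeff 0 (b' * a)
  have ht : t ≠ 0 := by
    intro h0
    rw [hgd, h0, map_zero] at hg0
    exact hg0 rfl
  refine ⟨t⁻¹, inv_ne_zero ht, fun j => ?_⟩
  have h1 : (-1) ^ (j : ℕ) * (M.submatrix id j.succAbove).det = C t * h j := by
    rw [← hgd]; exact hg j
  calc h j = C t⁻¹ * (C t * h j) := by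
        rw [← mul_assoc, ← C_mul, inv_mul_cancel₀ ht, C_1, one_mul]
    _ = _ := by rw [← h1]; ring

/-- For a `Π_n`-poised set `Y_n`, every H-basis
`h_0, …, h_{n+1}` of `I(Y_n)` admits a linear syzygy matrix
`Σ ∈ Π_1^{(n+1)×(n+2)}` of rank `n+1`, and any such matrix determines the
H-basis up to a nonzero constant: `h_j = (−1)^j w det Σ_j`. -/
theorem stmt13 (n : ℕ) (Y : Finset Pt) (hY : Poised n Y)
    (h : Fin (n + 2) → BPoly)
    (hHB : IsHBasisFam (vIdeal (Y : Set Pt)) h) :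
    (∃ M : Matrix (Fin (n + 1)) (Fin (n + 2)) BPoly,
        IsLinSyz n h M ∧ ratRank M = n + 1) ∧
    ∀ M : Matrix (Fin (n + 1)) (Fin (n + 2)) BPoly,
      IsLinSyz n h M → ratRank M = n + 1 →
        ∃ w : ℝ, w ≠ 0 ∧ ∀ j : Fin (n + 2),
          h j = (-1) ^ (j : ℕ) * C w * (M.submatrix id j.succAbove).det := by
  exact ⟨exists_syz hY hHB, fun M hM hR => unique_syz hY hHB M hM hR⟩
end
end

section
/- Let Y_n ⊂ ℝ² be a Π_n-poised set and suppose there exist linearly independent polynomials h_0, …, h_{n+1} ∈ Π_{n+1} ∩ I(Y_n) that admit a linear syzygy matrix Σ(x) ∈ Π_1^{(n+1)×(n+2)} of rank n + 1 whose j-th column equals k(x)·e_i for some nonconstant k ∈ Π_1, some standard unit vector e_i (1 ≤ i ≤ n+1) and some column index j ∈ {0,…,n+1}. Then K = V(k) is a maximal line for Y_n, i.e., #(K ∩ Y_n) = n + 1. -/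
open MvPolynomial

noncomputable section

lemma aux_gcd {n : ℕ} (g : Fin (n + 1) → BPoly) :
    ∃ (d : BPoly) (g' : Fin (n + 1) → BPoly), (∀ l, g l = d * g' l) ∧
      ∀ x a : BPoly, (∀ l, x ∣ a * g' l) → x ∣ a := by
  classical
  obtain ⟨inst⟩ : Nonempty (NormalizedGCDMonoid BPoly) := inferInstance
  obtain ⟨g', h1, h2⟩ := Finset.extract_gcd (s := Finset.univ) g ⟨0, Finset.mem_univ _⟩
  refine ⟨Finset.univ.gcd g, g', fun l => h1 l (Finset.mem_univ _), fun x a hx => ?_⟩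
  have h3 : x ∣ Finset.univ.gcd (fun l => a * g' l) := Finset.dvd_gcd fun l _ => hx l
  have h4 := h3.trans (Finset.gcd_mul_left' (s := Finset.univ) (f := g') a).dvd
  rwa [h2, mul_one] at h4

lemma aux_irred {k : BPoly} (hk : k.totalDegree = 1) : Irreducible k := by
  apply irreducible_of_totalDegree_eq_one hk
  intro x hx
  rw [isUnit_iff_ne_zero]
  rintro rfl
  have : k = 0 := by
    ext m
    simpa using hx m
  simp [this] at hk

/-- no nonzero polynomial of degree at most `n` vanishes on a poised set -/
lemma aux_unisolv {n : ℕ} {Y : Finset Pt} (hY : Poised n Y) {p : BPoly}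
    (hp : p.totalDegree ≤ n) (h0 : ∀ y ∈ Y, eval y p = 0) : p = 0 := by
  obtain ⟨q, _, hq⟩ := hY 0
  rw [hq p ⟨(mem_restrictTotalDegree _ _ _).2 hp, h0⟩,
    hq 0 ⟨(PiLE n).zero_mem, by simp⟩]

def topCoeff (n : ℕ) : BPoly →ₗ[ℝ] (Fin (n + 2) → ℝ) where
  toFun p a := p.coeff (Finsupp.single 0 (a : ℕ) + Finsupp.single 1 (n + 1 - (a : ℕ)))
  map_add' p q := by ext; simp
  map_smul' c p := by ext; simp

lemma aux_top {n : ℕ} {p : BPoly} (hp : p.totalDegree ≤ n + 1) (h0 : topCoeff n p = 0) :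
    p.totalDegree ≤ n := by
  refine Finset.sup_le ?_
  intro m hm
  have h1 := (le_totalDegree hm).trans hp
  have h2 : (m.sum fun _ e => e) = m 0 + m 1 := by
    rw [Finsupp.sum_fintype _ _ (fun _ => rfl), Fin.sum_univ_two]
  rw [h2] at h1 ⊢
  by_contra hlt
  have h3 : m 0 + m 1 = n + 1 := by omega
  have h4 := congrFun h0 ⟨m 0, by omega⟩
  have h5 : (Finsupp.single 0 (m 0) + Finsupp.single 1 (n + 1 - m 0) : Fin 2 →₀ ℕ) = m := by
    ext x
    fin_cases x
    · simp
    · simp; omega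
  simp only [topCoeff, LinearMap.coe_mk, AddHom.coe_mk, h5] at h4
  exact (mem_support_iff.1 hm) h4

lemma aux_span {n : ℕ} {Y : Finset Pt} (hY : Poised n Y)
    {h : Fin (n + 2) → BPoly} (hd : ∀ l, (h l).totalDegree ≤ n + 1)
    (hv : ∀ l, ∀ y ∈ Y, eval y (h l) = 0)
    (hind : LinearIndependent ℝ h) {f : BPoly} (hf : f.totalDegree ≤ n + 1)
    (hfv : ∀ y ∈ Y, eval y f = 0) : ∃ c : Fin (n + 2) → ℝ, f = ∑ l, C (c l) * h l := by
  have key : ∀ c : Fin (n + 2) → ℝ, (∑ l, C (c l) * h l).totalDegree ≤ n + 1 ∧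
      ∀ y ∈ Y, eval y (∑ l, C (c l) * h l) = 0 := by
    intro c
    constructor
    · apply totalDegree_finsetSum_le
      intro l _
      refine (totalDegree_mul _ _).trans ?_
      simpa using hd l
    · intro y hy
      simp [hv _ y hy]
  have hli : LinearIndependent ℝ (fun l => topCoeff n (h l)) := by
    rw [Fintype.linearIndependent_iff] at hind ⊢
    intro c hc
    apply hind c
    have e : ∑ l, c l • h l = ∑ l, C (c l) * h l := by simp [smul_eq_C_mul]
    rw [e]
    apply aux_unisolv hY (aux_top (key c).1 ?_) (key c).2
    rw [← e, map_sum]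
    simpa using hc
  have hsp := hli.span_eq_top_of_card_eq_finrank' (by simp)
  have hm : topCoeff n f ∈ Submodule.span ℝ (Set.range fun l => topCoeff n (h l)) := by
    rw [hsp]; trivial
  rw [Submodule.mem_span_range_iff_exists_fun] at hm
  obtain ⟨c, hc⟩ := hm
  refine ⟨c, ?_⟩
  rw [← sub_eq_zero]
  apply aux_unisolv hY (aux_top ((totalDegree_sub _ _).trans (max_le hf (key c).1)) ?_)
  · intro y hy
    rw [map_sub, hfv y hy, (key c).2 y hy, sub_zero]
  · rw [map_sub, ← hc, sub_eq_zero, map_sum]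
    simp [← smul_eq_C_mul]

lemma aux_unit {n : ℕ} {Y : Finset Pt} (hY : Poised n Y)
    {h : Fin (n + 2) → BPoly} (hd : ∀ l, (h l).totalDegree ≤ n + 1)
    (hv : ∀ l, ∀ y ∈ Y, eval y (h l) = 0)
    (hind : LinearIndependent ℝ h) {d : BPoly} (hdvd : ∀ l, d ∣ h l) : IsUnit d := by
  classical
  have hL : ∀ y : Pt, ∃ p : BPoly, p.totalDegree ≤ n ∧
      (∀ y' ∈ Y, eval y' p = if y' = y then 1 else 0) := by
    intro y
    obtain ⟨p, ⟨h1, h2⟩, _⟩ := hY (fun y' => if y' = y then 1 else 0)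
    exact ⟨p, (mem_restrictTotalDegree _ _ _).1 h1, h2⟩
  choose L hL1 hL2 using hL
  have h1 : ∀ f : BPoly, f.totalDegree ≤ n + 1 → (∀ y ∈ Y, eval y f = 0) → d ∣ f := by
    intro f hf hfv
    obtain ⟨c, hc⟩ := aux_span hY hd hv hind hf hfv
    rw [hc]
    exact Finset.dvd_sum fun l _ => (hdvd l).mul_left _
  have hX : ∀ (a : Fin 2) (y : Pt), d ∣ (X a - C (y a)) * L y := by
    intro a y
    apply h1
    · refine (totalDegree_mul _ _).trans ?_
      have := hL1 y
      have h2 : (X a - C (y a) : BPoly).totalDegree ≤ 1 :=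
        (totalDegree_sub _ _).trans (by simp)
      omega
    · intro y' hy'
      rw [map_mul, hL2 y y' hy']
      split_ifs with hh
      · simp [hh]
      · simp
  have hdL : ∀ y, d ∣ L y := by
    intro y
    have hir : ∀ a : Fin 2, (X a - C (y a) : BPoly).totalDegree = 1 := by
      intro a
      rw [sub_eq_add_neg, ← C_neg, totalDegree_add_eq_left_of_totalDegree_lt] <;> simp
    have hrp : IsRelPrime (X 0 - C (y 0) : BPoly) (X 1 - C (y 1)) := by
      rw [(aux_irred (hir 0)).isRelPrime_iff_not_dvd]
      rintro ⟨r, hr⟩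
      have := congrArg (eval ![y 0, y 1 + 1]) hr
      simp at this
    obtain ⟨inst⟩ : Nonempty (NormalizedGCDMonoid BPoly) := inferInstance
    have h3 := (dvd_gcd (hX 0 y) (hX 1 y)).trans (gcd_mul_right' (L y) _ _).dvd
    exact (gcd_isUnit_iff_isRelPrime.2 hrp).dvd_mul_left.1 h3
  have hsum : ∑ y ∈ Y, L y = 1 := by
    rw [← sub_eq_zero]
    apply aux_unisolv hY
    · refine (totalDegree_sub _ _).trans (max_le ?_ (by simp))
      exact totalDegree_finsetSum_le fun y _ => hL1 y
    · intro y hy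
      rw [map_sub, map_sum, Finset.sum_congr rfl (fun x hx => hL2 x y hy)]
      simp [hy]
  rw [isUnit_iff_dvd_one, ← hsum]
  exact Finset.dvd_sum fun y _ => hdL y

lemma aux_det_deg {n : ℕ} (B : Matrix (Fin (n + 1)) (Fin (n + 1)) BPoly) (i : Fin (n + 1))
    (hi : ∀ l, (B i l).totalDegree = 0) (hB : ∀ i' l, (B i' l).totalDegree ≤ 1) :
    B.det.totalDegree ≤ n := by
  rw [Matrix.det_apply]
  apply totalDegree_finsetSum_le
  intro σ _
  refine (totalDegree_smul_le _ _).trans ?_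
  refine (totalDegree_finsetProd _ _).trans ?_
  have : ∀ r, (B (σ r) r).totalDegree ≤ if r = σ.symm i then 0 else 1 := by
    intro r
    split_ifs with hr
    · rw [hr, Equiv.apply_symm_apply, hi]
    · exact hB _ _
  refine (Finset.sum_le_sum fun r _ => this r).trans ?_
  rw [Finset.sum_ite]
  simp [Finset.filter_ne', Finset.card_erase_of_mem]

lemma aux_det_ne {n : ℕ} (h : Fin (n + 2) → BPoly) (hne : ∀ l, h l ≠ 0)
    (M : Matrix (Fin (n + 1)) (Fin (n + 2)) BPoly)
    (hM : ∀ i, ∑ j, M i j * h j = 0) (hrk : ratRank M = n + 1)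
    (k : BPoly) (hk : k ≠ 0)
    (i : Fin (n + 1)) (j : Fin (n + 2))
    (hcol : ∀ i' : Fin (n + 1), M i' j = if i' = i then k else 0) :
    (Matrix.of fun i' l => if i' = i then (if l = 0 then 1 else 0) else M i' (j.succAbove l) :
      Matrix (Fin (n + 1)) (Fin (n + 1)) BPoly).det ≠ 0 := by
  set B := (Matrix.of fun i' l => if i' = i then (if l = 0 then 1 else 0) else M i' (j.succAbove l) :
      Matrix (Fin (n + 1)) (Fin (n + 1)) BPoly) with hB
  let F := FractionRing BPoly
  let φ := algebraMap BPoly F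
  have hinj : Function.Injective φ := IsFractionRing.injective BPoly F
  intro hdet
  obtain ⟨v, hv0, hv⟩ := Matrix.exists_mulVec_eq_zero_iff.2 hdet
  -- extend `v` to a kernel vector of `k`-scaled `M`
  let w : Fin (n + 2) → BPoly := j.insertNth (-∑ l, M i (j.succAbove l) * v l) (fun l => k * v l)
  have hw : M.mulVec w = 0 := by
    ext1 i'
    simp only [Matrix.mulVec, dotProduct, Pi.zero_apply]
    rw [Fin.sum_univ_succAbove _ j]
    simp only [w, Fin.insertNth_apply_same, Fin.insertNth_apply_succAbove, hcol]
    by_cases hi : i' = i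
    · subst hi
      simp only [if_true, mul_neg, Finset.mul_sum]
      rw [neg_add_eq_zero]
      exact Finset.sum_congr rfl fun l _ => by ring
    · have := congrFun hv i'
      simp only [Matrix.mulVec, dotProduct, hB, Matrix.of_apply, hi, if_false, Pi.zero_apply] at this
      simp only [hi, if_false, zero_mul, zero_add]
      rw [← mul_zero k, ← this, Finset.mul_sum]
      exact Finset.sum_congr rfl fun l _ => by ring
  have hv00 : v 0 = 0 := by
    have := congrFun hv i
    simpa [Matrix.mulVec, dotProduct, hB] using this
  have hw0 : w (j.succAbove 0) = 0 := by simp [w, hv00]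
  let N := M.map φ
  have hker : Module.finrank F (LinearMap.ker N.mulVecLin) = 1 := by
    have h1 := LinearMap.finrank_range_add_finrank_ker N.mulVecLin
    have h2 : Module.finrank F (LinearMap.range N.mulVecLin) = n + 1 := hrk
    rw [h2] at h1
    simp at h1
    omega
  have hmk : ∀ u : Fin (n + 2) → BPoly, M.mulVec u = 0 →
      (fun l => φ (u l)) ∈ LinearMap.ker N.mulVecLin := by
    intro u hu
    rw [LinearMap.mem_ker, Matrix.mulVecLin_apply]
    have := RingHom.map_mulVec φ M u
    ext i'
    rw [← Function.comp_def, ← this i', hu]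
    simp
  have hh : M.mulVec h = 0 := by
    ext1 i'
    exact hM i'
  have hnz : (⟨_, hmk h hh⟩ : LinearMap.ker N.mulVecLin) ≠ 0 := by
    intro h0
    have := congrFun (congrArg Subtype.val h0) 0
    exact hne 0 (hinj (by simpa using this))
  obtain ⟨c, hc⟩ := (finrank_eq_one_iff_of_nonzero' _ hnz).1 hker ⟨_, hmk w hw⟩
  have hc' : ∀ l, c * φ (h l) = φ (w l) := fun l => congrFun (congrArg Subtype.val hc) l
  have hc0 : c = 0 := by
    have := hc' (j.succAbove 0)
    rw [hw0, map_zero, mul_eq_zero] at this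
    rcases this with h1 | h1
    · exact h1
    · exact absurd (hinj (h1.trans (map_zero φ).symm)) (hne _)
  apply hv0
  ext1 l
  have h1 := hc' (j.succAbove l)
  rw [hc0, zero_mul] at h1
  have h2 := hinj (h1.symm.trans (map_zero φ).symm)
  simp only [w, Fin.insertNth_apply_succAbove] at h2
  exact (mul_eq_zero.1 h2).resolve_left hk

lemma aux_affine {k : BPoly} (hk : k.totalDegree = 1) :
    ∃ a b c : ℝ, (a ≠ 0 ∨ b ≠ 0) ∧ ∀ x : Pt, eval x k = a * x 0 + b * x 1 + c := by
  have hk' : k = C (k.coeff (Finsupp.single 0 1)) * X 0 + C (k.coeff (Finsupp.single 1 1)) * X 1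
      + C (k.coeff 0) := by
    ext m
    have hs : (m.sum fun _ e => e) = m 0 + m 1 := by
      rw [Finsupp.sum_fintype _ _ (fun _ => rfl), Fin.sum_univ_two]
    simp only [coeff_add, coeff_C_mul, coeff_X', coeff_C]
    have e0 : (Finsupp.single 0 1 = m) ↔ m 0 = 1 ∧ m 1 = 0 := by
      simp [Finsupp.ext_iff, Fin.forall_fin_two, eq_comm]
    have e1 : (Finsupp.single 1 1 = m) ↔ m 0 = 0 ∧ m 1 = 1 := by
      simp [Finsupp.ext_iff, Fin.forall_fin_two, eq_comm]
    have e2 : (0 = m) ↔ m 0 = 0 ∧ m 1 = 0 := by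
      simp [Finsupp.ext_iff, Fin.forall_fin_two, eq_comm]
    by_cases c0 : Finsupp.single 0 1 = m
    · have c := e0.1 c0
      rw [if_pos c0, if_neg (by rw [e1]; omega), if_neg (by rw [e2]; omega), c0]
      simp
    by_cases c1 : Finsupp.single 1 1 = m
    · have c := e1.1 c1
      rw [if_neg c0, if_pos c1, if_neg (by rw [e2]; omega), c1]
      simp
    by_cases c2 : 0 = m
    · rw [if_neg c0, if_neg c1, if_pos c2, c2]
      simp
    rw [if_neg c0, if_neg c1, if_neg c2]
    by_contra hne
    have hm : m ∈ k.support := mem_support_iff.2 (by simpa using hne)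
    have := le_totalDegree hm
    rw [hk, hs] at this
    rw [e0] at c0
    rw [e1] at c1
    rw [e2] at c2
    omega
  refine ⟨k.coeff (Finsupp.single 0 1), k.coeff (Finsupp.single 1 1), k.coeff 0, ?_, ?_⟩
  · by_contra! hh
    rw [hh.1, hh.2] at hk'
    rw [hk'] at hk
    simp at hk
  · intro x
    conv_lhs => rw [hk']
    simp

lemma aux_upper {n : ℕ} {Y : Finset Pt} (hY : Poised n Y) {k : BPoly} (hk : k.totalDegree = 1)
    (T : Finset Pt) (hT : T ⊆ Y) (hTk : ∀ y ∈ T, eval y k = 0) : T.card ≤ n + 1 := by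
  classical
  rcases T.eq_empty_or_nonempty with rfl | ⟨y0, hy0⟩
  · simp
  obtain ⟨a, b, c, hab, hev⟩ := aux_affine hk
  obtain ⟨p, ⟨h1, h2⟩, _⟩ := hY (fun y' => if y' = y0 then 1 else 0)
  have h1 := (mem_restrictTotalDegree _ _ _).1 h1
  let v : Pt := ![-b, a]
  let γ : Fin 2 → Polynomial ℝ := fun i => Polynomial.C (v i) * Polynomial.X + Polynomial.C (y0 i)
  let q : Polynomial ℝ := aeval γ p
  have hq : ∀ t : ℝ, q.eval t = eval (fun i => v i * t + y0 i) p := by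
    intro t
    have : (Polynomial.evalRingHom t).comp (aeval γ : BPoly →ₐ[ℝ] Polynomial ℝ).toRingHom
        = eval (fun i => v i * t + y0 i) := by
      apply MvPolynomial.ringHom_ext
      · intro r; simp
      · intro i; simp [γ]
    exact RingHom.congr_fun this p
  have hqd : q.natDegree ≤ n := by
    have := aeval_natDegree_le p h1 γ (n := 1) (fun i => Polynomial.natDegree_linear_le)
    simpa using this
  have hq0 : q.eval 0 = 1 := by
    rw [hq]
    have := h2 y0 (hT hy0)
    simpa using this
  have hqne : q ≠ 0 := by
    intro h0
    rw [h0] at hq0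
    simp at hq0
  have hpar : ∀ y ∈ T, ∃ t : ℝ, y = fun i => v i * t + y0 i := by
    intro y hy
    have e1 := hTk y hy
    have e2 := hTk y0 hy0
    rw [hev] at e1 e2
    rcases hab with ha | hb
    · refine ⟨(y 1 - y0 1) / a, ?_⟩
      ext x
      fin_cases x
      · simp [v]; field_simp; linarith
      · simp [v]; field_simp; linarith
    · refine ⟨-(y 0 - y0 0) / b, ?_⟩
      ext x
      fin_cases x
      · simp [v]; field_simp; linarith
      · simp [v]; field_simp; linarith
  choose! τ hτ using hpar
  have hcard : (T.erase y0).card ≤ q.roots.toFinset.card := by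
    apply Finset.card_le_card_of_injOn τ
    · intro y hy
      have hy := Finset.mem_erase.1 (Finset.mem_coe.1 hy)
      rw [Finset.mem_coe, Multiset.mem_toFinset, Polynomial.mem_roots hqne, Polynomial.IsRoot, hq,
        ← hτ y hy.2, h2 y (hT hy.2)]
      simp [hy.1]
    · intro y hy y' hy' hyy
      have hy := Finset.mem_erase.1 (Finset.mem_coe.1 hy)
      have hy' := Finset.mem_erase.1 (Finset.mem_coe.1 hy')
      rw [hτ y hy.2, hτ y' hy'.2, hyy]
  have h3 := (hcard.trans (Multiset.toFinset_card_le _)).trans (q.card_roots')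
  rw [Finset.card_erase_of_mem hy0] at h3
  omega

/-- If a `Π_n`-poised set `Y_n` admits linearly independent
`h_0, …, h_{n+1} ∈ Π_{n+1} ∩ I(Y_n)` with a rank-`(n+1)` linear syzygy matrix
whose `j`-th column equals `k(x)·e_i`, `k` nonconstant linear, then `K = V(k)`
is a maximal line for `Y_n`: `#(K ∩ Y_n) = n+1`. -/
theorem stmt16 (n : ℕ) (Y : Finset Pt) (hY : Poised n Y)
    (h : Fin (n + 2) → BPoly)
    (hmem : ∀ i, h i ∈ PiLE (n + 1) ⊓ vSub (Y : Set Pt))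
    (hind : LinearIndependent ℝ h)
    (M : Matrix (Fin (n + 1)) (Fin (n + 2)) BPoly)
    (hM : IsLinSyz n h M) (hrk : ratRank M = n + 1)
    (k : BPoly) (hk : k.totalDegree = 1)
    (i : Fin (n + 1)) (j : Fin (n + 2))
    (hcol : ∀ i' : Fin (n + 1), M i' j = if i' = i then k else 0) :
    ((Y : Set Pt) ∩ {x | eval x k = 0}).ncard = n + 1 := by

  classical
  have hd : ∀ l, (h l).totalDegree ≤ n + 1 := fun l =>
    (mem_restrictTotalDegree _ _ _).1 (hmem l).1
  have hv : ∀ l, ∀ y ∈ Y, eval y (h l) = 0 := fun l y hy => (hmem l).2 y hy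
  have hne : ∀ l, h l ≠ 0 := fun l => hind.ne_zero l
  have hk0 : k ≠ 0 := by rintro rfl; simp at hk
  have hMd : ∀ i j, (M i j).totalDegree ≤ 1 := fun i j =>
    (mem_restrictTotalDegree _ _ _).1 (hM.1 i j)
  obtain ⟨d, g, hg, hgcd⟩ := aux_gcd (fun l => h (j.succAbove l))
  have hd0 : d ≠ 0 := by
    intro h0
    have := hg 0
    rw [h0, zero_mul] at this
    exact hne _ this
  set B := (Matrix.of fun i' l => if i' = i then (if l = 0 then 1 else 0) else M i' (j.succAbove l) :
      Matrix (Fin (n + 1)) (Fin (n + 1)) BPoly) with hB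
  have hdet : B.det ≠ 0 := aux_det_ne h hne M hM.2 hrk k hk0 i j hcol
  have hdeg : B.det.totalDegree ≤ n := by
    apply aux_det_deg B i
    · intro l
      simp only [hB, Matrix.of_apply, if_true]
      split_ifs <;> simp
    · intro i' l
      simp only [hB, Matrix.of_apply]
      split_ifs
      · simp
      · simp
      · exact hMd _ _
  have hBg : B.mulVec g = fun i' => if i' = i then g 0 else 0 := by
    ext1 i'
    by_cases hi : i' = i
    · simp [Matrix.mulVec, dotProduct, hB, hi]
    · simp only [Matrix.mulVec, dotProduct, hB, Matrix.of_apply, hi, if_false]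
      have h1 := hM.2 i'
      rw [Fin.sum_univ_succAbove _ j, hcol, if_neg hi, zero_mul, zero_add] at h1
      apply (mul_eq_zero.1 (?_ : d * _ = 0)).resolve_left hd0
      rw [← h1, Finset.mul_sum]
      exact Finset.sum_congr rfl fun l _ => by rw [hg l]; ring
  have hdvd : g 0 ∣ B.det := by
    apply hgcd
    intro l
    have h1 : (B.adjugate.mulVec (B.mulVec g)) l = B.det * g l := by
      rw [Matrix.mulVec_mulVec, Matrix.adjugate_mul, Matrix.smul_mulVec, Matrix.one_mulVec]
      simp
    rw [← h1, hBg]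
    simp only [Matrix.mulVec, dotProduct]
    refine Finset.dvd_sum fun x _ => ?_
    split_ifs
    · exact Dvd.intro_left _ rfl
    · simp
  have hnu : ¬ IsUnit d := by
    intro hu
    have h1 : h (j.succAbove 0) ∣ B.det := by
      have := hg 0
      rw [this]
      exact (hu.mul_left_dvd).2 hdvd
    have h2 := totalDegree_le_of_dvd_of_isDomain h1 hdet
    exact hne _ (aux_unisolv hY (h2.trans hdeg) (hv _))
  have hkir := aux_irred hk
  have hrow : d ∣ k * h j := by
    have h1 := hM.2 i
    rw [Fin.sum_univ_succAbove _ j, hcol, if_pos rfl] at h1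
    rw [eq_neg_of_add_eq_zero_left h1, dvd_neg]
    refine Finset.dvd_sum fun l _ => ?_
    rw [hg l]
    exact (Dvd.intro _ rfl).mul_left _
  have hkd : k ∣ d := by
    by_contra hnd
    have hrp : IsRelPrime d k := (hkir.isRelPrime_iff_not_dvd.2 hnd).symm
    have hdj : d ∣ h j := hrp.dvd_of_dvd_mul_left hrow
    apply hnu
    apply aux_unit hY hd hv hind
    intro l
    rcases Fin.eq_self_or_eq_succAbove j l with rfl | ⟨l', rfl⟩
    · exact hdj
    · rw [hg l']; exact Dvd.intro _ rfl
  have hq : ∀ l : Fin (n + 1), ∃ q, h (j.succAbove l) = k * q := fun l =>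
    hkd.trans ⟨_, hg l⟩
  choose q hq using hq
  have hqd : ∀ l, (q l).totalDegree ≤ n := by
    intro l
    have hq0 : q l ≠ 0 := by
      intro h0
      exact hne _ ((hq l).trans (by rw [h0, mul_zero]))
    have h1 := hd (j.succAbove l)
    rw [hq l, totalDegree_mul_of_isDomain hk0 hq0, hk] at h1
    omega
  let T := Y.filter (fun y => eval y k = 0)
  have hTeq : ((Y : Set Pt) ∩ {x | eval x k = 0}) = (T : Set Pt) := by
    ext x; simp [T]
  rw [hTeq, Set.ncard_coe_finset]
  apply le_antisymm
  · exact aux_upper hY hk T (Finset.filter_subset _ _) (fun y hy => (Finset.mem_filter.1 hy).2)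
  · have hli : LinearIndependent ℝ (fun l => (fun y : T => eval (y : Pt) (q l))) := by
      have hind' := hind.comp _ (Fin.succAbove_right_injective (p := j))
      rw [Fintype.linearIndependent_iff] at hind' ⊢
      intro c hc
      apply hind' c
      have e : ∑ l, c l • (h ∘ j.succAbove) l = k * ∑ l, C (c l) * q l := by
        rw [Finset.mul_sum]
        refine Finset.sum_congr rfl fun l _ => ?_
        rw [Function.comp_apply, hq l, smul_eq_C_mul]; ring
      rw [e]
      have hz : ∑ l, C (c l) * q l = 0 := by
        apply aux_unisolv hY
        · apply totalDegree_finsetSum_le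
          intro l _
          refine (totalDegree_mul _ _).trans ?_
          simpa using hqd l
        · intro y hy
          by_cases hyk : eval y k = 0
          · have := congrFun hc ⟨y, Finset.mem_filter.2 ⟨hy, hyk⟩⟩
            simpa using this
          · have h1 : eval y (k * ∑ l, C (c l) * q l) = 0 := by
              rw [← e, map_sum]
              refine Finset.sum_eq_zero fun l _ => ?_
              rw [smul_eval, Function.comp_apply, hv _ y hy, mul_zero]
            rw [map_mul] at h1
            exact (mul_eq_zero.1 h1).resolve_left hyk
      rw [hz, mul_zero]
    have := hli.fintype_card_le_finrank
    simpa using this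
end
end
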